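/- arXiv:1306.5358 — 2 statements merged into one kernel-verified Lean document; each statement's English description precedes it below -/
import Mathlib

section
/- Let 1/2 ≤ α < 1 and let ρ₀, ρ₁, σ₀, σ₁ be positive definite n×n matrices with tr(ρ₀) = tr(ρ₁) = t > 0. Then for s ∈ [0,1], D_α((1−s)ρ₀+sρ₁ ‖ (1−s)σ₀+sσ₁) ≤ (1−s) D_α(ρ₀‖σ₀) + s D_α(ρ₁‖σ₁), where D_α(ρ‖σ) = (α−1)^{−1} log( t^{−1} tr((σ^{(1−α)/(2α)} ρ σ^{(1−α)/(2α)})^α) ). -/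
open Matrix ComplexOrder

/-- Functional calculus for Hermitian matrices: apply `f` to the eigenvalues. -/
noncomputable def mfun {m : Type*} [Fintype m] [DecidableEq m] (f : ℝ → ℝ)
    (A : Matrix m m ℂ) : Matrix m m ℂ :=
  if hA : A.IsHermitian then
    (hA.eigenvectorUnitary : Matrix m m ℂ) *
      Matrix.diagonal (fun i => (f (hA.eigenvalues i) : ℂ)) *
      (star (hA.eigenvectorUnitary : Matrix m m ℂ))
  else 0

/-- Real matrix power via the functional calculus. -/
noncomputable def mpow {m : Type*} [Fintype m] [DecidableEq m]
    (A : Matrix m m ℂ) (p : ℝ) : Matrix m m ℂ :=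
  mfun (fun x => x ^ p) A


section aux

variable {n : ℕ}


theorem mfun_eq_cfc (f : ℝ → ℝ) (A : Matrix (Fin n) (Fin n) ℂ) (hA : A.IsHermitian) : mfun f A = cfc f A := by
  rw [hA.cfc_eq f, mfun, dif_pos hA, IsHermitian.cfc, Unitary.conjStarAlgAut_apply]
  rfl

theorem cont_spec (f : ℝ → ℝ) (A : Matrix (Fin n) (Fin n) ℂ) : ContinuousOn f (spectrum ℝ A) :=
  (A.finite_real_spectrum).continuousOn f

theorem mfun_herm (f : ℝ → ℝ) (A : Matrix (Fin n) (Fin n) ℂ) (hA : A.IsHermitian) : (mfun f A).IsHermitian := by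
  rw [mfun_eq_cfc f A hA]
  exact cfc_predicate f A

theorem mfun_congr {f g : ℝ → ℝ} {A : Matrix (Fin n) (Fin n) ℂ} (hA : A.PosDef) (h : ∀ x, 0 < x → f x = g x) :
    mfun f A = mfun g A := by
  unfold mfun
  simp only [dif_pos hA.1]
  congr 3
  funext i
  rw [h _ (hA.eigenvalues_pos i)]

theorem mfun_mul (f g : ℝ → ℝ) (A : Matrix (Fin n) (Fin n) ℂ) (hA : A.IsHermitian) :
    mfun f A * mfun g A = mfun (fun x => f x * g x) A := by
  rw [mfun_eq_cfc f A hA, mfun_eq_cfc g A hA, mfun_eq_cfc _ A hA,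
    cfc_mul f g A (cont_spec _ _) (cont_spec _ _)]

theorem mfun_comp (f g : ℝ → ℝ) (A : Matrix (Fin n) (Fin n) ℂ) (hA : A.IsHermitian) :
    mfun f (mfun g A) = mfun (fun x => f (g x)) A := by
  rw [mfun_eq_cfc f _ (mfun_herm g A hA), mfun_eq_cfc g A hA, mfun_eq_cfc _ A hA]
  exact (cfc_comp' f g A ((A.finite_real_spectrum.image g).continuousOn f) (cont_spec _ _) hA).symm

theorem mfun_id (A : Matrix (Fin n) (Fin n) ℂ) (hA : A.IsHermitian) : mfun (fun x => x) A = A := by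
  rw [mfun_eq_cfc _ A hA]
  exact cfc_id' ℝ A hA

theorem mfun_one (A : Matrix (Fin n) (Fin n) ℂ) (hA : A.IsHermitian) : mfun (fun _ => 1) A = 1 := by
  rw [mfun_eq_cfc _ A hA]
  exact cfc_const_one ℝ A hA

theorem mfun_posDef (f : ℝ → ℝ) (A : Matrix (Fin n) (Fin n) ℂ) (hA : A.PosDef) (hf : ∀ x, 0 < x → 0 < f x) :
    (mfun f A).PosDef := by
  unfold mfun
  rw [dif_pos hA.1]
  rw [(Unitary.isUnit_coe (U := hA.1.eigenvectorUnitary)).posDef_star_right_conjugate_iff]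
  rw [posDef_diagonal_iff]
  intro i
  exact_mod_cast hf _ (hA.eigenvalues_pos i)

theorem mpow_posDef {A : Matrix (Fin n) (Fin n) ℂ} (hA : A.PosDef) (p : ℝ) : (mpow A p).PosDef :=
  mfun_posDef _ A hA fun _ hx => Real.rpow_pos_of_pos hx p

theorem mpow_add {A : Matrix (Fin n) (Fin n) ℂ} (hA : A.PosDef) (p q : ℝ) : mpow A p * mpow A q = mpow A (p + q) := by
  unfold mpow
  rw [mfun_mul _ _ A hA.1]
  exact mfun_congr hA fun x hx => (Real.rpow_add hx p q).symm

theorem mpow_mpow {A : Matrix (Fin n) (Fin n) ℂ} (hA : A.PosDef) (p q : ℝ) : mpow (mpow A p) q = mpow A (p * q) := by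
  unfold mpow
  rw [mfun_comp _ _ A hA.1]
  exact mfun_congr hA fun x hx => (Real.rpow_mul hx.le p q).symm

theorem mpow_one' {A : Matrix (Fin n) (Fin n) ℂ} (hA : A.PosDef) : mpow A 1 = A := by
  unfold mpow
  simp only [Real.rpow_one]
  exact mfun_id A hA.1

theorem mpow_zero' {A : Matrix (Fin n) (Fin n) ℂ} (hA : A.PosDef) : mpow A 0 = 1 := by
  unfold mpow
  simp only [Real.rpow_zero]
  exact mfun_one A hA.1

theorem mpow_neg_one {A : Matrix (Fin n) (Fin n) ℂ} (hA : A.PosDef) : mpow A (-1) = A⁻¹ := by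
  symm
  apply Matrix.inv_eq_left_inv
  conv_lhs => rw [← mpow_one' hA]
  rw [mpow_mpow hA, mpow_add hA]
  norm_num
  exact mpow_zero' hA

/-- coordinates in the two eigenbases -/
noncomputable def crd {A C : Matrix (Fin n) (Fin n) ℂ} (hA : A.IsHermitian) (hC : C.IsHermitian) (B : Matrix (Fin n) (Fin n) ℂ) : Matrix (Fin n) (Fin n) ℂ :=
  star (hA.eigenvectorUnitary : Matrix (Fin n) (Fin n) ℂ) * B * (hC.eigenvectorUnitary : Matrix (Fin n) (Fin n) ℂ)

noncomputable def Sf (φ : ℝ → ℝ → ℝ) {A C : Matrix (Fin n) (Fin n) ℂ} (hA : A.IsHermitian) (hC : C.IsHermitian)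
    (B : Matrix (Fin n) (Fin n) ℂ) : ℝ :=
  ∑ i, ∑ j, φ (hA.eigenvalues i) (hC.eigenvalues j) * Complex.normSq (crd hA hC B i j)

theorem Sf_mul (f g : ℝ → ℝ) {A C : Matrix (Fin n) (Fin n) ℂ} (hA : A.IsHermitian) (hC : C.IsHermitian) (B : Matrix (Fin n) (Fin n) ℂ) :
    Sf (fun a c => f a * g c) hA hC B = (mfun f A * B * mfun g C * Bᴴ).trace.re := by
  have h1 : (mfun f A * B * mfun g C * Bᴴ).trace =
      (Matrix.diagonal (fun i => (f (hA.eigenvalues i) : ℂ)) * crd hA hC B *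
        Matrix.diagonal (fun i => (g (hC.eigenvalues i) : ℂ)) * (crd hA hC B)ᴴ).trace := by
    unfold mfun crd
    simp only [dif_pos hA, dif_pos hC, conjTranspose_mul, star_eq_conjTranspose,
      conjTranspose_conjTranspose]
    simp only [Matrix.mul_assoc]
    rw [Matrix.trace_mul_comm]
    simp only [Matrix.mul_assoc]
  rw [h1, Sf, Matrix.trace, Complex.re_sum]
  refine Finset.sum_congr rfl fun i _ => ?_
  rw [Matrix.diag_apply, Matrix.mul_apply, Complex.re_sum]
  refine Finset.sum_congr rfl fun j _ => ?_
  rw [Matrix.mul_diagonal, Matrix.diagonal_mul, conjTranspose_apply]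
  rw [show ∀ a b c d : ℂ, a * b * c * d = (a * c) * (b * d) by intros; ring]
  rw [Complex.star_def, Complex.mul_conj]
  norm_cast

theorem crd_surj {A C : Matrix (Fin n) (Fin n) ℂ} (hA : A.IsHermitian) (hC : C.IsHermitian) (x : Matrix (Fin n) (Fin n) ℂ) :
    ∃ X, crd hA hC X = x := by
  refine ⟨(hA.eigenvectorUnitary : Matrix (Fin n) (Fin n) ℂ) * x * star (hC.eigenvectorUnitary : Matrix (Fin n) (Fin n) ℂ), ?_⟩
  unfold crd
  rw [show ∀ U U' V V' : Matrix (Fin n) (Fin n) ℂ, U' * (U * x * V') * V = (U' * U) * x * (V' * V) by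
    intros; simp only [Matrix.mul_assoc]]
  simp

theorem crd_sub {A C : Matrix (Fin n) (Fin n) ℂ} (hA : A.IsHermitian) (hC : C.IsHermitian) (B X : Matrix (Fin n) (Fin n) ℂ) :
    crd hA hC (B - X) = crd hA hC B - crd hA hC X := by
  simp [crd, Matrix.mul_sub, Matrix.sub_mul]

theorem scalar_par (t a c : ℝ) (ht : 0 < t) (ha : 0 < a) (hc : 0 < c) (b x : ℂ) :
    a * c / (t * c + a) * Complex.normSq b ≤
      t⁻¹ * (a * Complex.normSq x) + c * Complex.normSq (b - x) := by
  have hd : 0 < t * c + a := by positivity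
  have key : t⁻¹ * (a * Complex.normSq x) + c * Complex.normSq (b - x)
      - a * c / (t * c + a) * Complex.normSq b =
      (((t * c + a) * x.re - t * c * b.re) ^ 2 + ((t * c + a) * x.im - t * c * b.im) ^ 2)
        / (t * (t * c + a)) := by
    simp only [Complex.normSq_apply, Complex.sub_re, Complex.sub_im]
    field_simp
    ring
  have : 0 ≤ (((t * c + a) * x.re - t * c * b.re) ^ 2 + ((t * c + a) * x.im - t * c * b.im) ^ 2)
        / (t * (t * c + a)) := by positivity
  linarith

theorem scalar_par_eq (t a c : ℝ) (ht : 0 < t) (ha : 0 < a) (hc : 0 < c) (b x : ℂ)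
    (hx : x = ((t * c / (t * c + a) : ℝ) : ℂ) * b) :
    a * c / (t * c + a) * Complex.normSq b =
      t⁻¹ * (a * Complex.normSq x) + c * Complex.normSq (b - x) := by
  have hd : t * c + a ≠ 0 := by positivity
  subst hx
  simp only [Complex.normSq_apply, Complex.sub_re, Complex.sub_im, Complex.re_ofReal_mul,
    Complex.im_ofReal_mul]
  field_simp
  ring

noncomputable def par (t a c : ℝ) : ℝ := a * c / (t * c + a)

/-- the linear functional -/
noncomputable def Lf (t : ℝ) (B X A C : Matrix (Fin n) (Fin n) ℂ) : ℝ :=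
  t⁻¹ * (A * X * Xᴴ).trace.re + ((B - X) * C * (B - X)ᴴ).trace.re

theorem Lf_eq (t : ℝ) {A C : Matrix (Fin n) (Fin n) ℂ} (hA : A.IsHermitian) (hC : C.IsHermitian) (B X : Matrix (Fin n) (Fin n) ℂ) :
    Lf t B X A C = ∑ i, ∑ j, (t⁻¹ * (hA.eigenvalues i * Complex.normSq (crd hA hC X i j)) +
      hC.eigenvalues j * Complex.normSq (crd hA hC B i j - crd hA hC X i j)) := by
  have h1 := Sf_mul (fun a => a) (fun _ => 1) hA hC X
  have h2 := Sf_mul (fun _ => 1) (fun a => a) hA hC (B - X)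
  rw [mfun_id _ hA, mfun_one _ hC, Matrix.mul_one] at h1
  rw [mfun_id _ hC, mfun_one _ hA, Matrix.one_mul] at h2
  rw [Lf, ← h1, ← h2]
  simp only [Sf, crd_sub, Matrix.sub_apply, mul_one, one_mul, Finset.sum_add_distrib,
    Finset.mul_sum]

theorem Sf_par_le {t : ℝ} (ht : 0 < t) {A C : Matrix (Fin n) (Fin n) ℂ} (hA : A.PosDef) (hC : C.PosDef) (B X : Matrix (Fin n) (Fin n) ℂ) :
    Sf (par t) hA.1 hC.1 B ≤ Lf t B X A C := by
  rw [Lf_eq t hA.1 hC.1]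
  refine Finset.sum_le_sum fun i _ => Finset.sum_le_sum fun j _ => ?_
  exact scalar_par t _ _ ht (hA.eigenvalues_pos i) (hC.eigenvalues_pos j) _ _

theorem Sf_par_eq {t : ℝ} (ht : 0 < t) {A C : Matrix (Fin n) (Fin n) ℂ} (hA : A.PosDef) (hC : C.PosDef) (B : Matrix (Fin n) (Fin n) ℂ) :
    ∃ X, Sf (par t) hA.1 hC.1 B = Lf t B X A C := by
  obtain ⟨X, hX⟩ := crd_surj hA.1 hC.1 (fun i j => ((t * hC.1.eigenvalues j /
    (t * hC.1.eigenvalues j + hA.1.eigenvalues i) : ℝ) : ℂ) * crd hA.1 hC.1 B i j)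
  refine ⟨X, ?_⟩
  rw [Lf_eq t hA.1 hC.1]
  refine Finset.sum_congr rfl fun i _ => Finset.sum_congr rfl fun j _ => ?_
  refine scalar_par_eq t _ _ ht (hA.eigenvalues_pos i) (hC.eigenvalues_pos j) _ _ ?_
  rw [hX]

/-- convex combination -/
noncomputable def cc (s : ℝ) (A C : Matrix (Fin n) (Fin n) ℂ) : Matrix (Fin n) (Fin n) ℂ := ((1 - s : ℝ) : ℂ) • A + ((s : ℝ) : ℂ) • C

theorem cc_posDef {s : ℝ} (hs0 : 0 ≤ s) (hs1 : s ≤ 1) {A C : Matrix (Fin n) (Fin n) ℂ} (hA : A.PosDef)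
    (hC : C.PosDef) : (cc s A C).PosDef := by
  unfold cc
  rcases hs0.eq_or_lt with h | h
  · subst h; simpa using hA
  rcases hs1.eq_or_lt with h' | h'
  · subst h'; simpa using hC
  · refine PosDef.add (hA.smul ?_) (hC.smul ?_)
    · exact_mod_cast sub_pos.2 h'
    · exact_mod_cast h

theorem tr_cc (s : ℝ) (P Q A C : Matrix (Fin n) (Fin n) ℂ) : (P * cc s A C * Q).trace.re =
    (1 - s) * (P * A * Q).trace.re + s * (P * C * Q).trace.re := by
  simp only [cc, Matrix.mul_add, Matrix.add_mul, Matrix.trace_add, Complex.add_re,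
    Matrix.mul_smul, Matrix.smul_mul, Matrix.trace_smul, smul_eq_mul, Complex.re_ofReal_mul]

theorem Lf_cc (t s : ℝ) (B X A₀ A₁ C₀ C₁ : Matrix (Fin n) (Fin n) ℂ) :
    Lf t B X (cc s A₀ A₁) (cc s C₀ C₁) = (1 - s) * Lf t B X A₀ C₀ + s * Lf t B X A₁ C₁ := by
  have h := tr_cc s 1 (X * Xᴴ) A₀ A₁
  simp only [Matrix.one_mul, ← Matrix.mul_assoc] at h
  rw [Lf, Lf, Lf, tr_cc, h]
  ring

theorem Sf_par_concave {t : ℝ} (ht : 0 < t) {s : ℝ} (hs0 : 0 ≤ s) (hs1 : s ≤ 1)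
    {A₀ A₁ C₀ C₁ : Matrix (Fin n) (Fin n) ℂ} (hA₀ : A₀.PosDef) (hA₁ : A₁.PosDef) (hC₀ : C₀.PosDef) (hC₁ : C₁.PosDef)
    (B : Matrix (Fin n) (Fin n) ℂ) : (1 - s) * Sf (par t) hA₀.1 hC₀.1 B + s * Sf (par t) hA₁.1 hC₁.1 B ≤
      Sf (par t) (cc_posDef hs0 hs1 hA₀ hA₁).1 (cc_posDef hs0 hs1 hC₀ hC₁).1 B := by
  obtain ⟨X, hX⟩ := Sf_par_eq ht (cc_posDef hs0 hs1 hA₀ hA₁) (cc_posDef hs0 hs1 hC₀ hC₁) B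
  rw [hX, Lf_cc]
  have h0 := Sf_par_le ht hA₀ hC₀ B X
  have h1 := Sf_par_le ht hA₁ hC₁ B X
  have : 0 ≤ 1 - s := by linarith
  gcongr

open MeasureTheory in
theorem par_integrable {p a c : ℝ} (hp : p ∈ Set.Ioo (0 : ℝ) 1) (ha : 0 < a) (hc : 0 < c) :
    IntegrableOn (fun t => t ^ (p - 1) * par t a c) (Set.Ioi 0) ∧
    ∫ t in Set.Ioi 0, t ^ (p - 1) * par t a c =
      a ^ p * c ^ (1 - p) * ∫ t in Set.Ioi 0, Real.rpowIntegrand₀₁ p t 1 := by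
  have hx : 0 ≤ a / c := by positivity
  have heq : Set.EqOn (fun t => c * Real.rpowIntegrand₀₁ p t (a / c))
      (fun t => t ^ (p - 1) * par t a c) (Set.Ioi 0) := by
    intro t ht
    have ht' : 0 < t := ht
    simp only
    rw [Real.rpowIntegrand₀₁_eq_pow_div hp ht'.le hx, par]
    have : t * c + a ≠ 0 := by positivity
    have : t + a / c ≠ 0 := by positivity
    field_simp
  constructor
  · exact IntegrableOn.congr_fun ((Real.integrableOn_rpowIntegrand₀₁_Ioi hp hx).const_mul c) heq
      measurableSet_Ioi
  · rw [← setIntegral_congr_fun measurableSet_Ioi heq, integral_const_mul,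
      Real.integral_rpowIntegrand₀₁_eq_rpow_mul_const hp hx, Real.div_rpow ha.le hc.le,
      Real.rpow_sub hc, Real.rpow_one]
    have := (Real.rpow_pos_of_pos hc p).ne'
    field_simp

open MeasureTheory in
theorem Sf_integral {p : ℝ} (hp : p ∈ Set.Ioo (0 : ℝ) 1) {A C : Matrix (Fin n) (Fin n) ℂ} (hA : A.PosDef)
    (hC : C.PosDef) (B : Matrix (Fin n) (Fin n) ℂ) :
    IntegrableOn (fun t => t ^ (p - 1) * Sf (par t) hA.1 hC.1 B) (Set.Ioi 0) ∧
    ∫ t in Set.Ioi 0, t ^ (p - 1) * Sf (par t) hA.1 hC.1 B =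
      Sf (fun a c => a ^ p * c ^ (1 - p)) hA.1 hC.1 B *
        ∫ t in Set.Ioi 0, Real.rpowIntegrand₀₁ p t 1 := by
  have h := fun i j => par_integrable hp (hA.eigenvalues_pos i) (hC.eigenvalues_pos j)
  simp only [Sf, Finset.mul_sum, ← mul_assoc, Finset.sum_mul]
  constructor
  · refine integrable_finsetSum _ fun i _ => integrable_finsetSum _ fun j _ => ?_
    exact (h i j).1.mul_const _
  · rw [integral_finsetSum]
    · refine Finset.sum_congr rfl fun i _ => ?_
      rw [integral_finsetSum]
      · refine Finset.sum_congr rfl fun j _ => ?_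
        rw [integral_mul_const, (h i j).2]
        ring
      · intro j _
        exact (h i j).1.mul_const _
    · intro i _
      refine integrable_finsetSum _ fun j _ => ?_
      exact (h i j).1.mul_const _

open MeasureTheory in
/-- Lieb concavity theorem. -/
theorem lieb {p : ℝ} (hp0 : 0 < p) (hp1 : p ≤ 1) {s : ℝ} (hs0 : 0 ≤ s) (hs1 : s ≤ 1)
    {A₀ A₁ C₀ C₁ : Matrix (Fin n) (Fin n) ℂ} (hA₀ : A₀.PosDef) (hA₁ : A₁.PosDef) (hC₀ : C₀.PosDef) (hC₁ : C₁.PosDef)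
    (B : Matrix (Fin n) (Fin n) ℂ) :
    (1 - s) * (mpow A₀ p * B * mpow C₀ (1 - p) * Bᴴ).trace.re +
      s * (mpow A₁ p * B * mpow C₁ (1 - p) * Bᴴ).trace.re ≤
    (mpow (cc s A₀ A₁) p * B * mpow (cc s C₀ C₁) (1 - p) * Bᴴ).trace.re := by
  have hA := cc_posDef hs0 hs1 hA₀ hA₁
  have hC := cc_posDef hs0 hs1 hC₀ hC₁
  rcases hp1.eq_or_lt with h | h
  · subst h
    rw [sub_self, mpow_zero' hC₀, mpow_zero' hC₁, mpow_zero' hC, mpow_one' hA, mpow_one' hA₀,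
      mpow_one' hA₁]
    have := tr_cc s 1 (B * 1 * Bᴴ) A₀ A₁
    simp only [Matrix.one_mul, ← Matrix.mul_assoc] at this
    exact this.ge
  · have hp : p ∈ Set.Ioo (0 : ℝ) 1 := ⟨hp0, h⟩
    unfold mpow
    rw [← Sf_mul _ _ hA₀.1 hC₀.1, ← Sf_mul _ _ hA₁.1 hC₁.1, ← Sf_mul _ _ hA.1 hC.1]
    have I := Real.integral_rpowIntegrand₀₁_one_pos hp
    refine le_of_mul_le_mul_right ?_ I
    rw [add_mul, mul_assoc, mul_assoc, ← (Sf_integral hp hA hC B).2,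
      ← (Sf_integral hp hA₀ hC₀ B).2, ← (Sf_integral hp hA₁ hC₁ B).2,
      ← integral_const_mul, ← integral_const_mul, ← integral_add]
    · refine setIntegral_mono_on ?_ (Sf_integral hp hA hC B).1 measurableSet_Ioi ?_
      · exact ((Sf_integral hp hA₀ hC₀ B).1.const_mul _).add
          ((Sf_integral hp hA₁ hC₁ B).1.const_mul _)
      · intro t ht
        have ht' : 0 < t := ht
        have h1 := Sf_par_concave ht' hs0 hs1 hA₀ hA₁ hC₀ hC₁ B
        have h2 := mul_le_mul_of_nonneg_left h1 (Real.rpow_nonneg ht'.le (p - 1))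
        linarith
    · exact ((Sf_integral hp hA₀ hC₀ B).1.const_mul _)
    · exact ((Sf_integral hp hA₁ hC₁ B).1.const_mul _)

/-- general trace inequality from a scalar inequality -/
theorem Sf_mono {φ ψ : ℝ → ℝ → ℝ} (h : ∀ a c, 0 < a → 0 < c → φ a c ≤ ψ a c) {A C : Matrix (Fin n) (Fin n) ℂ}
    (hA : A.PosDef) (hC : C.PosDef) (B : Matrix (Fin n) (Fin n) ℂ) : Sf φ hA.1 hC.1 B ≤ Sf ψ hA.1 hC.1 B := by
  refine Finset.sum_le_sum fun i _ => Finset.sum_le_sum fun j _ => ?_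
  exact mul_le_mul_of_nonneg_right (h _ _ (hA.eigenvalues_pos i) (hC.eigenvalues_pos j))
    (Complex.normSq_nonneg _)

theorem Sf_lin (r s : ℝ) (φ ψ : ℝ → ℝ → ℝ) {A C : Matrix (Fin n) (Fin n) ℂ}
    (hA : A.IsHermitian) (hC : C.IsHermitian) (B : Matrix (Fin n) (Fin n) ℂ) :
    Sf (fun a c => r * φ a c + s * ψ a c) hA hC B = r * Sf φ hA hC B + s * Sf ψ hA hC B := by
  simp only [Sf, Finset.mul_sum, ← Finset.sum_add_distrib]
  refine Finset.sum_congr rfl fun i _ => Finset.sum_congr rfl fun j _ => ?_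
  ring

theorem Sf_left (f : ℝ → ℝ) {A C : Matrix (Fin n) (Fin n) ℂ} (hA : A.IsHermitian) (hC : C.IsHermitian) :
    Sf (fun a _ => f a) hA hC 1 = (mfun f A).trace.re := by
  have := Sf_mul f (fun _ => 1) hA hC 1
  rw [mfun_one _ hC] at this
  simpa using this

theorem Sf_right (f : ℝ → ℝ) {A C : Matrix (Fin n) (Fin n) ℂ} (hA : A.IsHermitian) (hC : C.IsHermitian) :
    Sf (fun _ c => f c) hA hC 1 = (mfun f C).trace.re := by
  have := Sf_mul (fun _ => 1) f hA hC 1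
  rw [mfun_one _ hA] at this
  simpa using this

/-- first Young inequality -/
theorem young1 {α : ℝ} (h0 : 0 < α) (h1 : α < 1) {X M : Matrix (Fin n) (Fin n) ℂ} (hX : X.PosDef) (hM : M.PosDef) :
    (mpow X α).trace.re ≤ α * (X * mpow M (-1)).trace.re +
      (1 - α) * (mpow M (α / (1 - α))).trace.re := by
  have key := Sf_mono (φ := fun a _ => a ^ α)
    (ψ := fun a c => α * (a * c ^ (-1 : ℝ)) + (1 - α) * c ^ (α / (1 - α))) ?_ hX hM 1
  · rw [Sf_lin, Sf_left (fun x => x ^ α), Sf_right (fun x => x ^ (α / (1 - α))),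
      Sf_mul (fun a => a) (fun c => c ^ (-1 : ℝ)), mfun_id _ hX.1] at key
    simpa [mpow] using key
  · intro a c ha hc
    have h1' : 1 - α ≠ 0 := by linarith
    have h := Real.geom_mean_le_arith_mean2_weighted (w₁ := α) (w₂ := 1 - α)
      (p₁ := a * c ^ (-1 : ℝ)) (p₂ := c ^ (α / (1 - α))) h0.le (by linarith) (by positivity)
      (by positivity) (by ring)
    refine le_trans (le_of_eq ?_) h
    rw [Real.mul_rpow ha.le (by positivity), ← Real.rpow_mul hc.le, ← Real.rpow_mul hc.le,
      mul_assoc, ← Real.rpow_add hc, div_mul_cancel₀ _ h1']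
    simp

/-- second Young inequality -/
theorem young2 {p : ℝ} (h0 : 0 < p) (h1 : p ≤ 1) {Y Z : Matrix (Fin n) (Fin n) ℂ} (hY : Y.PosDef) (hZ : Z.PosDef) :
    (Y * mpow Z (1 - p)).trace.re ≤ p * (mpow Y (1 / p)).trace.re + (1 - p) * Z.trace.re := by
  have key := Sf_mono (φ := fun a c => a * c ^ (1 - p))
    (ψ := fun a c => p * a ^ (1 / p) + (1 - p) * c) ?_ hY hZ 1
  · rw [Sf_lin, Sf_left (fun x => x ^ (1 / p)), Sf_right (fun x => x),
      Sf_mul (fun a => a) (fun c => c ^ (1 - p)), mfun_id _ hY.1, mfun_id _ hZ.1] at key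
    simpa [mpow] using key
  · intro a c ha hc
    have h := Real.geom_mean_le_arith_mean2_weighted (w₁ := p) (w₂ := 1 - p)
      (p₁ := a ^ (1 / p)) (p₂ := c) h0.le (by linarith) (by positivity)
      hc.le (by ring)
    refine le_trans (le_of_eq ?_) h
    rw [← Real.rpow_mul ha.le, one_div_mul_cancel h0.ne', Real.rpow_one]

theorem trace_mpow_comm {P Q : Matrix (Fin n) (Fin n) ℂ} (h1 : (P * Q).IsHermitian) (h2 : (Q * P).IsHermitian)
    (r : ℝ) : (mpow (P * Q) r).trace = (mpow (Q * P) r).trace := by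
  have h : h1.eigenvalues = h2.eigenvalues :=
    (IsHermitian.eigenvalues_eq_eigenvalues_iff h1 h2).2 (Matrix.charpoly_mul_comm P Q)
  have tr : ∀ {A : Matrix (Fin n) (Fin n) ℂ} (hA : A.IsHermitian), (mpow A r).trace =
      ∑ i, ((hA.eigenvalues i ^ r : ℝ) : ℂ) := by
    intro A hA
    rw [mpow, mfun, dif_pos hA, Matrix.trace_mul_cycle]
    simp [Matrix.trace_diagonal]
  rw [tr h1, tr h2, h]

theorem posDef_conj {A P : Matrix (Fin n) (Fin n) ℂ} (hA : A.PosDef) (hP : P.PosDef) : (P * A * P).PosDef := by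
  have := hA.conjTranspose_mul_mul_same (B := P) ?_
  · rwa [hP.1] at this
  · exact Matrix.mulVec_injective_of_isUnit hP.isUnit

/-- Epstein theorem -/
theorem epstein {p : ℝ} (hp0 : 0 < p) (hp1 : p ≤ 1) {s : ℝ} (hs0 : 0 ≤ s) (hs1 : s ≤ 1)
    {A₀ A₁ H : Matrix (Fin n) (Fin n) ℂ} (hA₀ : A₀.PosDef) (hA₁ : A₁.PosDef) (hH : H.PosDef) :
    (1 - s) * (mpow (H * mpow A₀ p * H) (1 / p)).trace.re +
      s * (mpow (H * mpow A₁ p * H) (1 / p)).trace.re ≤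
    (mpow (H * mpow (cc s A₀ A₁) p * H) (1 / p)).trace.re := by
  have hA := cc_posDef hs0 hs1 hA₀ hA₁
  have ex : ∀ {A : Matrix (Fin n) (Fin n) ℂ} (hA : A.PosDef), ∃ Z : Matrix (Fin n) (Fin n) ℂ, Z.PosDef ∧
      (mpow A p * H * mpow Z (1 - p) * Hᴴ).trace.re =
      p * (mpow (H * mpow A p * H) (1 / p)).trace.re + (1 - p) * Z.trace.re := by
    intro A hA
    have hY := posDef_conj (mpow_posDef hA p) hH
    refine ⟨mpow (H * mpow A p * H) (1 / p), mpow_posDef hY _, ?_⟩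
    rw [hH.1, Matrix.trace_mul_comm, ← Matrix.mul_assoc, ← Matrix.mul_assoc, mpow_mpow hY]
    have := mpow_add hY 1 (1 / p * (1 - p))
    rw [mpow_one' hY, show 1 + 1 / p * (1 - p) = 1 / p by field_simp; ring] at this
    rw [this]
    ring
  have le : ∀ {A Z : Matrix (Fin n) (Fin n) ℂ} (hA : A.PosDef) (hZ : Z.PosDef),
      (mpow A p * H * mpow Z (1 - p) * Hᴴ).trace.re ≤
      p * (mpow (H * mpow A p * H) (1 / p)).trace.re + (1 - p) * Z.trace.re := by
    intro A Z hA hZ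
    have hY := posDef_conj (mpow_posDef hA p) hH
    rw [hH.1, Matrix.trace_mul_comm, ← Matrix.mul_assoc, ← Matrix.mul_assoc]
    exact young2 hp0 hp1 hY hZ
  obtain ⟨Z₀, hZ₀, e₀⟩ := ex hA₀
  obtain ⟨Z₁, hZ₁, e₁⟩ := ex hA₁
  have l := le hA (cc_posDef hs0 hs1 hZ₀ hZ₁)
  have L := lieb hp0 hp1 hs0 hs1 hA₀ hA₁ hZ₀ hZ₁ H
  have T := tr_cc s 1 1 Z₀ Z₁
  simp only [Matrix.one_mul, Matrix.mul_one] at T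
  rw [e₀, e₁] at L
  rw [T] at l
  refine le_of_mul_le_mul_left ?_ hp0
  linarith

/-- swap form -/
theorem trace_swap {p : ℝ} {A H : Matrix (Fin n) (Fin n) ℂ} (hA : A.PosDef) (hH : H.PosDef) (r : ℝ) :
    (mpow (mpow A (p / 2) * (H * H) * mpow A (p / 2)) r).trace =
    (mpow (H * mpow A p * H) r).trace := by
  have hA2 := mpow_add hA (p / 2) (p / 2)
  rw [add_halves] at hA2
  have hP := mpow_posDef hA (p / 2)
  have e1 : mpow A (p / 2) * (H * H) * mpow A (p / 2) =
      (mpow A (p / 2) * H) * (H * mpow A (p / 2)) := by simp only [Matrix.mul_assoc]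
  have e2 : H * mpow A p * H = (H * mpow A (p / 2)) * (mpow A (p / 2) * H) := by
    rw [← hA2]; simp only [Matrix.mul_assoc]
  rw [e1, e2]
  refine trace_mpow_comm ?_ ?_ r
  · rw [IsHermitian, conjTranspose_mul, conjTranspose_mul, conjTranspose_mul, hP.1, hH.1]
  · rw [IsHermitian, conjTranspose_mul, conjTranspose_mul, conjTranspose_mul, hP.1, hH.1]

noncomputable def Qf (α : ℝ) (ρ σ : Matrix (Fin n) (Fin n) ℂ) : ℝ :=
  (mpow (mpow σ ((1 - α) / (2 * α)) * ρ * mpow σ ((1 - α) / (2 * α))) α).trace.re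

theorem Qf_concave {α : ℝ} (hα0 : 1/2 ≤ α) (hα1 : α < 1) {ρ₀ ρ₁ σ₀ σ₁ : Matrix (Fin n) (Fin n) ℂ}
    (hρ₀ : ρ₀.PosDef) (hρ₁ : ρ₁.PosDef) (hσ₀ : σ₀.PosDef) (hσ₁ : σ₁.PosDef)
    {s : ℝ} (hs0 : 0 ≤ s) (hs1 : s ≤ 1) :
    (1 - s) * Qf α ρ₀ σ₀ + s * Qf α ρ₁ σ₁ ≤ Qf α (cc s ρ₀ ρ₁) (cc s σ₀ σ₁) := by
  have hα : 0 < α := by linarith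
  have hα' : 0 < 1 - α := by linarith
  obtain ⟨p, hp⟩ : ∃ p, p = (1 - α) / α := ⟨_, rfl⟩
  have hp0 : 0 < p := by rw [hp]; positivity
  have hp1 : p ≤ 1 := by rw [hp, div_le_one hα]; linarith
  have hq : α / (1 - α) = 1 / p := by rw [hp, one_div_div]
  have hβ : (1 - α) / (2 * α) = p / 2 := by rw [hp]; field_simp
  unfold Qf
  rw [hβ]
  have hρ := cc_posDef hs0 hs1 hρ₀ hρ₁
  have hσ := cc_posDef hs0 hs1 hσ₀ hσ₁
  generalize hρs : cc s ρ₀ ρ₁ = ρ at *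
  -- upper bound for every positive H
  have le : ∀ {ρ σ H : Matrix (Fin n) (Fin n) ℂ} (hρ : ρ.PosDef) (hσ : σ.PosDef) (hH : H.PosDef),
      (mpow (mpow σ (p / 2) * ρ * mpow σ (p / 2)) α).trace.re ≤
      α * (ρ * mpow (H * H) (-1)).trace.re +
        (1 - α) * (mpow (H * mpow σ p * H) (1 / p)).trace.re := by
    intro ρ σ H hρ hσ hH
    have hP := mpow_posDef hσ (p / 2)
    have hHH : (H * H).PosDef := by simpa using posDef_conj PosDef.one hH
    have hM := posDef_conj hHH hP
    have := young1 hα hα1 (posDef_conj hρ hP) hM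
    rw [hq, trace_swap hσ hH] at this
    refine this.trans (le_of_eq ?_)
    congr 3
    rw [mpow_neg_one hM, mpow_neg_one hHH, Matrix.mul_inv_rev, Matrix.mul_inv_rev]
    have u1 : mpow σ (p / 2) * (mpow σ (p / 2))⁻¹ = 1 :=
      Matrix.mul_nonsing_inv _ ((Matrix.isUnit_iff_isUnit_det _).1 hP.isUnit)
    have u2 : (mpow σ (p / 2))⁻¹ * mpow σ (p / 2) = 1 :=
      Matrix.nonsing_inv_mul _ ((Matrix.isUnit_iff_isUnit_det _).1 hP.isUnit)
    generalize (mpow σ (p / 2))⁻¹ = R at *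
    rw [show mpow σ (p / 2) * ρ * mpow σ (p / 2) * (R * ((H * H)⁻¹ * R)) =
      mpow σ (p / 2) * (ρ * (mpow σ (p / 2) * R) * (H * H)⁻¹ * R) by
        simp only [Matrix.mul_assoc], u1, Matrix.trace_mul_comm, Matrix.mul_assoc, u2]
    simp
  have ex : ∃ H : Matrix (Fin n) (Fin n) ℂ, H.PosDef ∧
      (mpow (mpow (cc s σ₀ σ₁) (p / 2) * ρ * mpow (cc s σ₀ σ₁) (p / 2)) α).trace.re =
      α * (ρ * mpow (H * H) (-1)).trace.re +
        (1 - α) * (mpow (H * mpow (cc s σ₀ σ₁) p * H) (1 / p)).trace.re := by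
    generalize cc s σ₀ σ₁ = σ at *
    have hP := mpow_posDef hσ (p / 2)
    have hP' := mpow_posDef hσ (-(p / 2))
    have hX := posDef_conj hρ hP
    have hG := posDef_conj (mpow_posDef hX (1 - α)) hP'
    obtain ⟨X, hXe⟩ : ∃ X, X = mpow σ (p / 2) * ρ * mpow σ (p / 2) := ⟨_, rfl⟩
    rw [← hXe] at hX hG ⊢
    have hH := mpow_posDef hG (1 / 2)
    have hHH := mpow_add hG (1 / 2) (1 / 2)
    rw [add_halves, mpow_one' hG] at hHH
    refine ⟨_, hH, ?_⟩
    have u1 : mpow σ (p / 2) * mpow σ (-(p / 2)) = 1 := by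
      rw [mpow_add hσ, add_neg_cancel, mpow_zero' hσ]
    have u2 : mpow σ (-(p / 2)) * mpow σ (p / 2) = 1 := by
      rw [mpow_add hσ, neg_add_cancel, mpow_zero' hσ]
    rw [← trace_swap hσ hH, hHH]
    have e1 : mpow σ (p / 2) * (mpow σ (-(p / 2)) * mpow X (1 - α) * mpow σ (-(p / 2))) *
        mpow σ (p / 2) = mpow X (1 - α) := by
      rw [show ∀ a b c : Matrix (Fin n) (Fin n) ℂ, a * (b * c * b) * a = (a * b) * c * (b * a) by
        intros; simp only [Matrix.mul_assoc], u1, u2]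
      simp
    rw [e1, mpow_mpow hX, ← hq, mul_div_cancel₀ _ hα'.ne']
    have e2 : (mpow σ (-(p / 2)) * mpow X (1 - α) * mpow σ (-(p / 2)))⁻¹ =
        mpow σ (p / 2) * mpow X (α - 1) * mpow σ (p / 2) := by
      apply Matrix.inv_eq_left_inv
      rw [show ∀ a b c d : Matrix (Fin n) (Fin n) ℂ, a * c * a * (b * d * b) = a * (c * (a * b) * d) * b by
        intros; simp only [Matrix.mul_assoc], u1, Matrix.mul_one, mpow_add hX,
        sub_add_sub_cancel', sub_self, mpow_zero' hX, Matrix.mul_one, u1]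
    rw [mpow_neg_one hG, e2]
    have e3 : (ρ * (mpow σ (p / 2) * mpow X (α - 1) * mpow σ (p / 2))).trace =
        (mpow X α).trace := by
      rw [← Matrix.mul_assoc, Matrix.trace_mul_comm, ← Matrix.mul_assoc, ← Matrix.mul_assoc,
        ← hXe]
      have := mpow_add hX 1 (α - 1)
      rw [mpow_one' hX, add_sub_cancel] at this
      rw [this]
    rw [e3]
    ring
  obtain ⟨H, hH, e⟩ := ex
  rw [e]
  have l0 := le hρ₀ hσ₀ hH
  have l1 := le hρ₁ hσ₁ hH
  have E := epstein hp0 hp1 hs0 hs1 hσ₀ hσ₁ hH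
  have T := tr_cc s 1 (mpow (H * H) (-1)) ρ₀ ρ₁
  simp only [Matrix.one_mul] at T
  rw [← hρs, T]
  have hs' : 0 ≤ 1 - s := by linarith
  have m0 := mul_le_mul_of_nonneg_left l0 hs'
  have m1 := mul_le_mul_of_nonneg_left l1 hs0
  have m2 := mul_le_mul_of_nonneg_left E hα'.le
  linarith

theorem Qf_pos [NeZero n] {α : ℝ} {ρ σ : Matrix (Fin n) (Fin n) ℂ} (hρ : ρ.PosDef) (hσ : σ.PosDef) :
    0 < Qf α ρ σ := by
  have h := (mpow_posDef (posDef_conj hρ (mpow_posDef hσ ((1 - α) / (2 * α)))) α).trace_pos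
  exact (Complex.pos_iff.1 h).1

end aux

theorem D_jointly_convex {n : ℕ} (α : ℝ) (hα0 : 1/2 ≤ α) (hα1 : α < 1)
    (ρ₀ ρ₁ σ₀ σ₁ : Matrix (Fin n) (Fin n) ℂ)
    (hρ₀ : ρ₀.PosDef) (hρ₁ : ρ₁.PosDef) (hσ₀ : σ₀.PosDef) (hσ₁ : σ₁.PosDef)
    (t : ℝ) (ht : 0 < t) (htr₀ : ρ₀.trace = (t : ℂ)) (htr₁ : ρ₁.trace = (t : ℂ))
    (s : ℝ) (hs0 : 0 ≤ s) (hs1 : s ≤ 1) :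
    (fun (ρ σ : Matrix (Fin n) (Fin n) ℂ) => (α - 1)⁻¹ *
      Real.log (t⁻¹ *
        (mpow (mpow σ ((1 - α) / (2 * α)) * ρ * mpow σ ((1 - α) / (2 * α))) α).trace.re))
        (((1 - s : ℝ) : ℂ) • ρ₀ + ((s : ℝ) : ℂ) • ρ₁)
        (((1 - s : ℝ) : ℂ) • σ₀ + ((s : ℝ) : ℂ) • σ₁) ≤
      (1 - s) * (fun (ρ σ : Matrix (Fin n) (Fin n) ℂ) => (α - 1)⁻¹ *
      Real.log (t⁻¹ *
        (mpow (mpow σ ((1 - α) / (2 * α)) * ρ * mpow σ ((1 - α) / (2 * α))) α).trace.re)) ρ₀ σ₀ + s * (fun (ρ σ : Matrix (Fin n) (Fin n) ℂ) => (α - 1)⁻¹ *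
      Real.log (t⁻¹ *
        (mpow (mpow σ ((1 - α) / (2 * α)) * ρ * mpow σ ((1 - α) / (2 * α))) α).trace.re)) ρ₁ σ₁ := by
  have hn : NeZero n := by
    refine ⟨?_⟩
    rintro rfl
    simp [Matrix.trace] at htr₀
    exact ht.ne (by exact_mod_cast htr₀)
  have h0 := Qf_pos (α := α) hρ₀ hσ₀
  have h1 := Qf_pos (α := α) hρ₁ hσ₁
  have hc := Qf_concave hα0 hα1 hρ₀ hρ₁ hσ₀ hσ₁ hs0 hs1
  change (α - 1)⁻¹ * Real.log (t⁻¹ * Qf α (cc s ρ₀ ρ₁) (cc s σ₀ σ₁)) ≤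
    (1 - s) * ((α - 1)⁻¹ * Real.log (t⁻¹ * Qf α ρ₀ σ₀)) +
      s * ((α - 1)⁻¹ * Real.log (t⁻¹ * Qf α ρ₁ σ₁))
  have hs' : 0 ≤ 1 - s := by linarith
  have p0 : 0 < t⁻¹ * Qf α ρ₀ σ₀ := mul_pos (inv_pos.2 ht) h0
  have p1 : 0 < t⁻¹ * Qf α ρ₁ σ₁ := mul_pos (inv_pos.2 ht) h1
  have hlog := strictConcaveOn_log_Ioi.concaveOn.2 (Set.mem_Ioi.2 p0) (Set.mem_Ioi.2 p1) hs' hs0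
    (by ring)
  simp only [smul_eq_mul] at hlog
  have hpos : 0 < (1 - s) * (t⁻¹ * Qf α ρ₀ σ₀) + s * (t⁻¹ * Qf α ρ₁ σ₁) := by
    rcases hs0.eq_or_lt with h | h
    · subst h; simpa using p0
    · have := mul_pos h p1
      have := mul_nonneg hs' p0.le
      linarith
  have hle : (1 - s) * (t⁻¹ * Qf α ρ₀ σ₀) + s * (t⁻¹ * Qf α ρ₁ σ₁) ≤
      t⁻¹ * Qf α (cc s ρ₀ ρ₁) (cc s σ₀ σ₁) := by
    have := mul_le_mul_of_nonneg_left hc (inv_pos.2 ht).le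
    linarith
  have hl := hlog.trans (Real.log_le_log hpos hle)
  have hneg : (α - 1)⁻¹ ≤ 0 := inv_nonpos.2 (by linarith)
  have := mul_le_mul_of_nonpos_left hl hneg
  linarith
end

section
/- (Monotonicity under quantum operations, α > 1) Let ρ, σ be positive definite n×n matrices with tr(ρ) = 1 and let E be a completely positive trace preserving map on n×n matrices with E(ρ), E(σ) positive definite. Then for α > 1, (α−1)^{−1} log tr((E(σ)^{(1−α)/(2α)} E(ρ) E(σ)^{(1−α)/(2α)})^α) ≤ (α−1)^{−1} log tr((σ^{(1−α)/(2α)} ρ σ^{(1−α)/(2α)})^α). -/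
open Matrix ComplexOrder

noncomputable section AuxDPI

variable {n : ℕ}

/-- Complex powers of a Hermitian matrix. -/
def cpm {A : Matrix (Fin n) (Fin n) ℂ} (hA : A.PosDef) (z : ℂ) : Matrix (Fin n) (Fin n) ℂ :=
  (hA.1.eigenvectorUnitary : Matrix (Fin n) (Fin n) ℂ) *
      Matrix.diagonal (fun i => ((hA.1.eigenvalues i : ℂ) ^ z)) *
      (star (hA.1.eigenvectorUnitary : Matrix (Fin n) (Fin n) ℂ))

variable {A : Matrix (Fin n) (Fin n) ℂ} (hA : A.PosDef)

lemma cpm_ev_ne (i : Fin n) : (hA.1.eigenvalues i : ℂ) ≠ 0 := by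
  exact_mod_cast (hA.eigenvalues_pos i).ne'

lemma cpm_mul (z w : ℂ) : cpm hA z * cpm hA w = cpm hA (z + w) := by
  unfold cpm
  have h : star (hA.1.eigenvectorUnitary : Matrix (Fin n) (Fin n) ℂ) *
      (hA.1.eigenvectorUnitary : Matrix (Fin n) (Fin n) ℂ) = 1 :=
    Unitary.coe_star_mul_self _
  have h2 : (Matrix.diagonal (fun i => ((hA.1.eigenvalues i : ℂ) ^ (z + w)))) =
      Matrix.diagonal (fun i => ((hA.1.eigenvalues i : ℂ) ^ z)) *
      Matrix.diagonal (fun i => ((hA.1.eigenvalues i : ℂ) ^ w)) := by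
    rw [diagonal_mul_diagonal]
    congr 1
    funext i
    exact Complex.cpow_add _ _ (cpm_ev_ne hA i)
  rw [h2]
  simp only [mul_assoc]
  rw [← mul_assoc (star _) _ (_ * _), h, one_mul]

lemma cpm_mul' (z w : ℂ) (X : Matrix (Fin n) (Fin n) ℂ) :
    cpm hA z * (cpm hA w * X) = cpm hA (z + w) * X := by
  rw [← mul_assoc, cpm_mul]

lemma cpm_zero : cpm hA 0 = 1 := by
  unfold cpm
  simp

lemma cpm_one : cpm hA 1 = A := by
  unfold cpm
  conv_rhs => rw [hA.1.spectral_theorem, Unitary.conjStarAlgAut_apply]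
  simp [Function.comp_def]

lemma cpm_mul_self (z : ℂ) (X : Matrix (Fin n) (Fin n) ℂ) :
    cpm hA z * (A * X) = cpm hA (z + 1) * X := by
  have h := cpm_mul' hA z 1 X
  rwa [cpm_one] at h

lemma cpm_real (x : ℝ) : cpm hA (x : ℂ) = mpow A x := by
  unfold cpm mpow mfun
  rw [dif_pos hA.1]
  congr 3
  funext i
  rw [Complex.ofReal_cpow (hA.eigenvalues_pos i).le]

lemma cpm_conjTranspose (z : ℂ) : (cpm hA z)ᴴ = cpm hA (star z) := by
  unfold cpm
  simp only [star_eq_conjTranspose, conjTranspose_mul, conjTranspose_conjTranspose,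
    diagonal_conjTranspose, mul_assoc]
  congr 3
  funext i
  simp only [Pi.star_apply]
  have := Complex.cpow_conj (hA.1.eigenvalues i : ℂ) z (by
    rw [Complex.arg_ofReal_of_nonneg (hA.eigenvalues_pos i).le]; exact Real.pi_pos.ne)
  simp only [Complex.conj_ofReal] at this
  simpa using this.symm

lemma cpm_sandwich_posDef {A B : Matrix (Fin n) (Fin n) ℂ} (hA : A.PosDef) (hB : B.PosDef) (x : ℝ) :
    (mpow A x * B * mpow A x).PosDef := by
  rw [← cpm_real hA]
  have h : (cpm hA (x : ℂ))ᴴ = cpm hA x := by rw [cpm_conjTranspose]; simp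
  have hu : IsUnit (cpm hA (x : ℂ)) :=
    IsUnit.of_mul_eq_one (cpm hA (-x : ℂ)) (by rw [cpm_mul]; simp [cpm_zero])
  have := hB.conjTranspose_mul_mul_same (B := cpm hA (x : ℂ)) (mulVec_injective_of_isUnit hu)
  rwa [h] at this

/-- Entire functions bounded on the unit strip. -/
def GoodFn (g : ℂ → ℂ) : Prop :=
  Differentiable ℂ g ∧ ∃ C : ℝ, ∀ z : ℂ, 0 ≤ z.re → z.re ≤ 1 → ‖g z‖ ≤ C

lemma GoodFn.const (c : ℂ) : GoodFn (fun _ => c) :=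
  ⟨differentiable_const c, ‖c‖, fun _ _ _ => le_rfl⟩

lemma GoodFn.add {f g : ℂ → ℂ} (hf : GoodFn f) (hg : GoodFn g) : GoodFn (fun z => f z + g z) := by
  obtain ⟨hf, C, hC⟩ := hf
  obtain ⟨hg, D, hD⟩ := hg
  exact ⟨hf.add hg, C + D, fun z h0 h1 =>
    (norm_add_le _ _).trans (add_le_add (hC z h0 h1) (hD z h0 h1))⟩

lemma GoodFn.mul {f g : ℂ → ℂ} (hf : GoodFn f) (hg : GoodFn g) : GoodFn (fun z => f z * g z) := by
  obtain ⟨hf, C, hC⟩ := hf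
  obtain ⟨hg, D, hD⟩ := hg
  refine ⟨hf.mul hg, C * D, fun z h0 h1 => ?_⟩
  rw [norm_mul]
  exact mul_le_mul (hC z h0 h1) (hD z h0 h1) (norm_nonneg _) ((norm_nonneg _).trans (hC z h0 h1))

lemma GoodFn.sum {ι : Type*} (s : Finset ι) {f : ι → ℂ → ℂ} (hf : ∀ i, GoodFn (f i)) :
    GoodFn (fun z => ∑ i ∈ s, f i z) := by
  classical
  induction s using Finset.induction_on with
  | empty => simpa using GoodFn.const 0
  | insert a s ha ih =>
    simp only [Finset.sum_insert ha]
    exact (hf a).add ih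

lemma GoodFn.cpow (x : ℝ) (hx : 0 < x) (a b : ℝ) : GoodFn (fun z => (x : ℂ) ^ ((a : ℂ) + b * z)) := by
  constructor
  · have hx' : (x : ℂ) ≠ 0 := by exact_mod_cast hx.ne'
    intro z
    refine DifferentiableAt.const_cpow (by fun_prop) (Or.inl hx')
  · have hc : ContinuousOn (fun t : ℝ => x ^ (a + b * t)) (Set.Icc 0 1) := by
      apply Continuous.continuousOn
      exact Continuous.rpow continuous_const (by fun_prop) (fun _ => Or.inl hx.ne')
    obtain ⟨C, hC⟩ := isCompact_Icc.exists_bound_of_continuousOn hc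
    refine ⟨C, fun z h0 h1 => ?_⟩
    have := hC z.re ⟨h0, h1⟩
    rw [Complex.norm_cpow_eq_rpow_re_of_pos hx]
    simpa using (le_abs_self _).trans this

/-- Matrix valued version. -/
def GoodM (F : ℂ → Matrix (Fin n) (Fin n) ℂ) : Prop := ∀ i j, GoodFn (fun z => F z i j)

lemma GoodM.const (M : Matrix (Fin n) (Fin n) ℂ) : GoodM (fun _ => M) := fun _ _ => GoodFn.const _

lemma GoodM.mul {F G : ℂ → Matrix (Fin n) (Fin n) ℂ} (hF : GoodM F) (hG : GoodM G) :
    GoodM (fun z => F z * G z) := by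
  intro i j
  simp only [mul_apply]
  exact GoodFn.sum _ fun k => (hF i k).mul (hG k j)

lemma GoodM.sum {m : ℕ} {F : Fin m → ℂ → Matrix (Fin n) (Fin n) ℂ} (hF : ∀ k, GoodM (F k)) :
    GoodM (fun z => ∑ k, F k z) := by
  intro i j
  simp only [Matrix.sum_apply]
  exact GoodFn.sum _ fun k => hF k i j

lemma GoodM.trace {F : ℂ → Matrix (Fin n) (Fin n) ℂ} (hF : GoodM F) :
    GoodFn (fun z => (F z).trace) := by
  simp only [Matrix.trace, diag_apply]
  exact GoodFn.sum _ fun k => hF k k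

lemma GoodM.cpm (a b : ℝ) : GoodM (fun z => cpm hA ((a : ℂ) + b * z)) := by
  unfold _root_.cpm
  refine ((GoodM.const _).mul ?_).mul (GoodM.const _)
  intro i j
  by_cases h : i = j
  · subst h
    simpa using GoodFn.cpow _ (hA.eigenvalues_pos i) a b
  · simpa [h] using GoodFn.const 0

lemma norm_trace_mul_le (X Y : Matrix (Fin n) (Fin n) ℂ) :
    ‖(X * Y).trace‖ ≤ ((X * Xᴴ).trace.re + (Yᴴ * Y).trace.re) / 2 := by
  have h1 : (X * Xᴴ).trace.re = ∑ i, ∑ j, ‖X i j‖ ^ 2 := by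
    simp only [Matrix.trace, diag_apply, mul_apply, conjTranspose_apply, Complex.re_sum]
    refine Finset.sum_congr rfl fun i _ => Finset.sum_congr rfl fun j _ => ?_
    rw [← Complex.normSq_eq_norm_sq]
    simp [Complex.normSq_apply]
  have h2 : (Yᴴ * Y).trace.re = ∑ i, ∑ j, ‖Y j i‖ ^ 2 := by
    simp only [Matrix.trace, diag_apply, mul_apply, conjTranspose_apply, Complex.re_sum]
    refine Finset.sum_congr rfl fun i _ => Finset.sum_congr rfl fun j _ => ?_
    rw [← Complex.normSq_eq_norm_sq]
    simp [Complex.normSq_apply]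
  rw [h1, h2, ← Finset.sum_add_distrib,
    Finset.sum_div]
  simp only [Matrix.trace, diag_apply, mul_apply]
  refine (norm_sum_le _ _).trans (Finset.sum_le_sum fun i _ => ?_)
  rw [← Finset.sum_add_distrib, Finset.sum_div]
  refine (norm_sum_le _ _).trans (Finset.sum_le_sum fun j _ => ?_)
  rw [norm_mul]
  nlinarith [sq_nonneg (‖X i j‖ - ‖Y j i‖)]

/-- The Kraus map. -/
def kraus {m : ℕ} (V : Fin m → Matrix (Fin n) (Fin n) ℂ) (X : Matrix (Fin n) (Fin n) ℂ) :
    Matrix (Fin n) (Fin n) ℂ := ∑ k, V k * X * (V k)ᴴ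

lemma kraus_trace {m : ℕ} (V : Fin m → Matrix (Fin n) (Fin n) ℂ)
    (hV : ∑ k, (V k)ᴴ * V k = 1) (X : Matrix (Fin n) (Fin n) ℂ) :
    (kraus V X).trace = X.trace := by
  unfold kraus
  rw [trace_sum]
  conv_rhs => rw [← one_mul X, ← hV, Finset.sum_mul, trace_sum]
  refine Finset.sum_congr rfl fun k _ => ?_
  rw [trace_mul_comm, mul_assoc]

lemma kraus_bound {m : ℕ} (V : Fin m → Matrix (Fin n) (Fin n) ℂ)
    (H K L J : Matrix (Fin n) (Fin n) ℂ) :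
    ‖(H * kraus V (K * L) * J).trace‖ ≤
      ((H * kraus V (K * Kᴴ) * Hᴴ).trace.re + (Jᴴ * kraus V (Lᴴ * L) * J).trace.re) / 2 := by
  unfold kraus
  simp only [Finset.mul_sum, Finset.sum_mul, trace_sum, Complex.re_sum]
  rw [← Finset.sum_add_distrib, Finset.sum_div]
  refine (norm_sum_le _ _).trans (Finset.sum_le_sum fun k _ => ?_)
  have := norm_trace_mul_le (H * V k * K) (L * (V k)ᴴ * J)
  simpa only [conjTranspose_mul, conjTranspose_conjTranspose, mul_assoc] using this

lemma main_bound {m : ℕ} (V : Fin m → Matrix (Fin n) (Fin n) ℂ)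
    (hV : ∑ k, (V k)ᴴ * V k = 1) {σ R Q : Matrix (Fin n) (Fin n) ℂ}
    (hσ : σ.PosDef) (hR : R.PosDef) (hQ : Q.PosDef) (hW : (kraus V σ).PosDef)
    (p t : ℝ) (ht0 : 0 ≤ t) (ht1 : t ≤ 1) :
    ‖(cpm hQ (p * t) * cpm hW (-t / 2) *
      kraus V (cpm hσ (t / 2) * cpm hR (p * (1 - t)) * cpm hσ (t / 2)) * cpm hW (-t / 2)).trace‖ ≤
    (cpm hR p).trace.re ^ (1 - t) * (cpm hQ p).trace.re ^ t := by
  set f : ℂ → ℂ := fun z => (cpm hQ (p * z) * cpm hW (-z / 2) *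
      kraus V (cpm hσ (z / 2) * cpm hR (p * (1 - z)) * cpm hσ (z / 2)) * cpm hW (-z / 2)).trace
    with hf
  have hgood : GoodFn f := by
    have e1 : GoodM (fun z => cpm hQ (p * z)) := by
      simpa using GoodM.cpm hQ 0 p
    have e2 : GoodM (fun z => cpm hW (-z / 2)) := by
      have := GoodM.cpm hW 0 (-1/2)
      convert this using 3
      push_cast; ring
    have e3 : GoodM (fun z => cpm hσ (z / 2)) := by
      have := GoodM.cpm hσ 0 (1/2)
      convert this using 3
      push_cast; ring
    have e4 : GoodM (fun z => cpm hR (p * (1 - z))) := by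
      have := GoodM.cpm hR p (-p)
      convert this using 3
      push_cast; ring
    apply GoodM.trace
    refine ((e1.mul e2).mul ?_).mul e2
    exact GoodM.sum fun k => ((GoodM.const _).mul ((e3.mul e4).mul e3)).mul (GoodM.const _)
  obtain ⟨hd, C, hC⟩ := hgood
  have key := Complex.HadamardThreeLines.norm_le_interp_of_mem_verticalClosedStrip₀₁' f
    (z := (t : ℂ)) (a := (cpm hR p).trace.re) (b := (cpm hQ p).trace.re)
    ⟨by simpa using ht0, by simpa using ht1⟩ hd.diffContOnCl
    ⟨C, by rintro _ ⟨z, hz, rfl⟩; exact hC z hz.1 hz.2⟩ ?_ ?_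
  · simpa only [hf, Complex.ofReal_re] using key
  · intro z hz
    have hz' : z.re = 0 := hz
    have hs : star z = -z := by
      apply Complex.ext <;> simp [hz']
    have hb := kraus_bound V (cpm hQ (p * z) * cpm hW (-z / 2)) (cpm hσ (z / 2) * cpm hR (p / 2))
      (cpm hR (p / 2 - p * z) * cpm hσ (z / 2)) (cpm hW (-z / 2))
    have l : f z = (cpm hQ (p * z) * cpm hW (-z / 2) * kraus V (cpm hσ (z / 2) * cpm hR (p / 2) *
      (cpm hR (p / 2 - p * z) * cpm hσ (z / 2))) * cpm hW (-z / 2)).trace := by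
      simp only [hf, mul_assoc, cpm_mul']
      ring_nf
    rw [← l] at hb
    refine hb.trans (le_of_eq ?_)
    rw [trace_mul_comm _ (_)ᴴ, trace_mul_comm _ (cpm hW (-z / 2)),
      ← mul_assoc (_)ᴴ, ← mul_assoc (cpm hW (-z / 2)) (_)ᴴ]
    have u1 : (cpm hQ (p * z) * cpm hW (-z / 2))ᴴ * (cpm hQ (p * z) * cpm hW (-z / 2)) = 1 := by
      simp only [conjTranspose_mul, cpm_conjTranspose, mul_assoc, cpm_mul']
      have e1 : star ((p : ℂ) * z) + p * z = 0 := by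
        simp only [star_mul', hs]
        simp
      have e2 : star (-z / 2) + -z / 2 = 0 := by
        simp only [star_div₀, star_neg, hs]
        simp [← add_div]
      rw [e1, cpm_zero, one_mul, cpm_mul, e2, cpm_zero]
    have u2 : cpm hW (-z / 2) * (cpm hW (-z / 2))ᴴ = 1 := by
      simp only [cpm_conjTranspose, cpm_mul]
      simp [hs, cpm_zero, ← add_div]
    rw [u1, u2, one_mul, one_mul, kraus_trace V hV, kraus_trace V hV,
      trace_mul_comm (_ * _) (cpm hσ (z / 2) * cpm hR (p / 2))ᴴ,
      trace_mul_comm (cpm hR (p / 2 - p * z) * cpm hσ (z / 2))ᴴ]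
    have u3 : (cpm hσ (z / 2) * cpm hR (p / 2))ᴴ * (cpm hσ (z / 2) * cpm hR (p / 2)) = cpm hR p := by
      simp only [conjTranspose_mul, cpm_conjTranspose, mul_assoc, cpm_mul']
      simp [hs, cpm_mul, cpm_zero, ← add_div]
    have u4 : (cpm hR (p / 2 - p * z) * cpm hσ (z / 2)) *
        (cpm hR (p / 2 - p * z) * cpm hσ (z / 2))ᴴ = cpm hR p := by
      simp only [conjTranspose_mul, cpm_conjTranspose, mul_assoc, cpm_mul']
      simp [hs, cpm_mul, cpm_zero, ← add_div]
    rw [u3, u4]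
    ring
  · intro z hz
    have hz' : z.re = 1 := hz
    have hs : star z = 2 - z := by
      apply Complex.ext <;> simp [hz']
      norm_num
    have hb := kraus_bound V (cpm hQ (p * z - p / 2) * cpm hW (-z / 2))
      (cpm hσ (z / 2) * cpm hR (p * (1 - z)))
      (cpm hσ (z / 2)) (cpm hW (-z / 2) * cpm hQ (p / 2))
    have l : f z = (cpm hQ (p * z - p / 2) * cpm hW (-z / 2) *
        kraus V (cpm hσ (z / 2) * cpm hR (p * (1 - z)) * cpm hσ (z / 2)) *
        (cpm hW (-z / 2) * cpm hQ (p / 2))).trace := by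
      rw [← mul_assoc, trace_mul_comm _ (cpm hQ (p / 2))]
      simp only [hf, mul_assoc, cpm_mul']
      ring_nf
    rw [← l] at hb
    refine hb.trans (le_of_eq ?_)
    have u1 : (cpm hσ (z / 2) * cpm hR (p * (1 - z))) *
        (cpm hσ (z / 2) * cpm hR (p * (1 - z)))ᴴ = σ := by
      have e1 : (p : ℂ) * (1 - z) + star ((p : ℂ) * (1 - z)) = 0 := by
        simp only [star_mul', star_sub, star_one, hs]
        simp; ring
      have e2 : z / 2 + star (z / 2) = 1 := by
        simp only [star_div₀, hs]
        simp; ring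
      simp only [conjTranspose_mul, cpm_conjTranspose, mul_assoc, cpm_mul', e1, cpm_zero, one_mul]
      rw [cpm_mul, e2, cpm_one]
    have u2 : (cpm hσ (z / 2))ᴴ * cpm hσ (z / 2) = σ := by
      have e2 : star (z / 2) + z / 2 = 1 := by
        simp only [star_div₀, hs]
        simp; ring
      rw [cpm_conjTranspose, cpm_mul, e2, cpm_one]
    rw [u1, u2]
    have ez1 : -z / 2 + 1 + star (-z / 2) = 0 := by
      simp only [star_div₀, star_neg, hs]
      simp; ring
    have ez2 : star (-z / 2) + 1 + -z / 2 = 0 := by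
      rw [← ez1]; ring
    have u3 : cpm hQ (p * z - p / 2) * cpm hW (-z / 2) * kraus V σ *
        (cpm hQ (p * z - p / 2) * cpm hW (-z / 2))ᴴ = cpm hQ p := by
      simp only [conjTranspose_mul, cpm_conjTranspose, mul_assoc, cpm_mul', cpm_mul_self, ez1, cpm_zero, one_mul]
      rw [cpm_mul]
      congr 1
      simp only [star_sub, star_mul', star_div₀, hs]
      simp; ring
    have u4 : (cpm hW (-z / 2) * cpm hQ (p / 2))ᴴ * kraus V σ *
        (cpm hW (-z / 2) * cpm hQ (p / 2)) = cpm hQ p := by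
      simp only [conjTranspose_mul, cpm_conjTranspose, mul_assoc, cpm_mul', cpm_mul_self, ez2, cpm_zero, one_mul]
      rw [cpm_mul]
      congr 1
      simp
    rw [u3, u4]
    ring

lemma cpm_trace_pos (hn : 0 < n) (x : ℝ) : 0 < (cpm hA (x : ℂ)).trace.re := by
  unfold cpm
  rw [trace_mul_comm, ← mul_assoc, Unitary.coe_star_mul_self, one_mul, trace_diagonal,
    Complex.re_sum]
  have : Nonempty (Fin n) := ⟨⟨0, hn⟩⟩
  refine Finset.sum_pos (fun i _ => ?_) Finset.univ_nonempty
  rw [← Complex.ofReal_cpow (hA.eigenvalues_pos i).le, Complex.ofReal_re]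
  exact Real.rpow_pos_of_pos (hA.eigenvalues_pos i) x

end AuxDPI

theorem monotonicity_dpi {n : ℕ} (ρ σ : Matrix (Fin n) (Fin n) ℂ)
    (hρ : ρ.PosDef) (hσ : σ.PosDef) (htr : ρ.trace = 1) (α : ℝ) (hα : 1 < α)
    (m : ℕ) (V : Fin m → Matrix (Fin n) (Fin n) ℂ)
    (hV : ∑ k, (V k)ᴴ * V k = 1)
    (E : Matrix (Fin n) (Fin n) ℂ → Matrix (Fin n) (Fin n) ℂ)
    (hE : ∀ γ, E γ = ∑ k, V k * γ * (V k)ᴴ)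
    (hEρ : (E ρ).PosDef) (hEσ : (E σ).PosDef) :
    (α - 1)⁻¹ * Real.log
        ((mpow (mpow (E σ) ((1 - α) / (2 * α)) * E ρ * mpow (E σ) ((1 - α) / (2 * α))) α).trace.re) ≤
      (α - 1)⁻¹ * Real.log
        ((mpow (mpow σ ((1 - α) / (2 * α)) * ρ * mpow σ ((1 - α) / (2 * α))) α).trace.re) := by
  have hn : 0 < n := by
    rcases Nat.eq_zero_or_pos n with h | h
    · subst h
      simp [Matrix.trace] at htr
    · exact h
  obtain rfl : E = kraus V := funext hE
  have hR := cpm_sandwich_posDef hσ hρ ((1 - α) / (2 * α))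
  have hQ := cpm_sandwich_posDef hEσ hEρ ((1 - α) / (2 * α))
  set R := mpow σ ((1 - α) / (2 * α)) * ρ * mpow σ ((1 - α) / (2 * α)) with hRdef
  set Q := mpow (kraus V σ) ((1 - α) / (2 * α)) * kraus V ρ *
    mpow (kraus V σ) ((1 - α) / (2 * α)) with hQdef
  have hα0 : 0 < α := by linarith
  have hαc : (α : ℂ) ≠ 0 := by exact_mod_cast hα0.ne'
  have hb := main_bound V hV hσ hR hQ hEσ α ((α - 1) / α) (div_nonneg (by linarith) hα0.le)
    ((div_le_one hα0).2 (by linarith))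
  have hTR := cpm_trace_pos hR hn α
  have hTQ := cpm_trace_pos hQ hn α
  have e1 : cpm hσ ((((α - 1) / α : ℝ) : ℂ) / 2) * cpm hR (α * (1 - ((α - 1) / α : ℝ))) *
      cpm hσ ((((α - 1) / α : ℝ) : ℂ) / 2) = ρ := by
    have : (α : ℂ) * (1 - ((α - 1) / α : ℝ)) = 1 := by push_cast; field_simp; ring
    rw [this, cpm_one, hRdef, ← cpm_real hσ]
    simp only [mul_assoc, cpm_mul', cpm_mul]
    have h0 : (((α - 1) / α : ℝ) : ℂ) / 2 + (((1 - α) / (2 * α) : ℝ) : ℂ) = 0 := by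
      push_cast; field_simp; ring
    rw [h0, add_comm _ ((((α - 1) / α : ℝ) : ℂ) / 2), h0, cpm_zero, one_mul, mul_one]
  have e2 : cpm hQ (α * ((α - 1) / α : ℝ)) * cpm hEσ (-(((α - 1) / α : ℝ) : ℂ) / 2) *
      kraus V ρ * cpm hEσ (-(((α - 1) / α : ℝ) : ℂ) / 2) = cpm hQ α := by
    have h1 : -(((α - 1) / α : ℝ) : ℂ) / 2 = (((1 - α) / (2 * α) : ℝ) : ℂ) := by
      push_cast; field_simp; ring
    have h2 : (α : ℂ) * ((α - 1) / α : ℝ) + 1 = α := by push_cast; field_simp; ring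
    rw [h1, cpm_real hEσ]
    calc _ = cpm hQ (α * ((α - 1) / α : ℝ)) * (mpow (kraus V σ) ((1 - α) / (2 * α)) *
          kraus V ρ * mpow (kraus V σ) ((1 - α) / (2 * α))) := by simp only [mul_assoc]
      _ = cpm hQ (α * ((α - 1) / α : ℝ)) * cpm hQ 1 := by rw [cpm_one hQ]
      _ = _ := by rw [cpm_mul, h2]
  rw [e1, e2] at hb
  have hb2 := (Complex.re_le_norm _).trans hb
  rw [← cpm_real hR, ← cpm_real hQ]
  refine mul_le_mul_of_nonneg_left (Real.log_le_log hTQ ?_) (inv_nonneg.2 (by linarith))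
  set a := (cpm hR (α : ℂ)).trace.re
  set b := (cpm hQ (α : ℂ)).trace.re
  have hl := Real.log_le_log hTQ hb2
  rw [Real.log_mul (Real.rpow_pos_of_pos hTR _).ne' (Real.rpow_pos_of_pos hTQ _).ne',
    Real.log_rpow hTR, Real.log_rpow hTQ] at hl
  have hs : 1 - (α - 1) / α = 1 / α := by field_simp; ring
  have hs' : (α - 1) / α = 1 - 1 / α := by field_simp
  rw [hs, hs'] at hl
  have hp : 0 < 1 / α := by positivity
  have : Real.log b ≤ Real.log a := by
    have : 1 / α * Real.log b ≤ 1 / α * Real.log a := by linarith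
    exact le_of_mul_le_mul_left this hp
  exact (Real.log_le_log_iff hTQ hTR).1 this
end
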